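/- Let c ∈ (0,1), let (Ψ_δ)_{δ>0} satisfy Assumption A with constant C_Ψ, and let R₀ be an unperturbed wave. Then there exist constants C_L > 0 and δ* > 0, both independent of δ, such that for every 0 < δ < δ* and all δ-admissible functions S₁ and S₂, writing G_ℓ = G(S_ℓ) for ℓ = 1, 2: ‖A²G₂ − A²G₁‖_∞ + ‖A G₂ − A G₁‖_∞ + δ‖G₂ − G₁‖_∞ ≤ C_L δ ‖S₂' − S₁'‖_∞. -/

import Mathlib

open MeasureTheory Real Filter Topology

/-- The averaging operator `(A F)(x) = ∫_{x-1/2}^{x+1/2} F(s) ds`. -/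
noncomputable def Aop (F : ℝ → ℝ) : ℝ → ℝ := fun x => ∫ s in (x - 1/2)..(x + 1/2), F s

/-- The operator `M F = A(A F) - c² F`. -/
noncomputable def Mop (c : ℝ) (F : ℝ → ℝ) : ℝ → ℝ := fun x => Aop (Aop F) x - c ^ 2 * F x

/-- Membership in `W^{2,∞}(ℝ)`. -/
def IsW2inf (S : ℝ → ℝ) : Prop :=
  Differentiable ℝ S ∧ (∃ C : ℝ, ∀ x, |S x| ≤ C ∧ |deriv S x| ≤ C) ∧
    ∃ K : NNReal, LipschitzWith K (deriv S)

/-- Assumption A for the family `(Ψ_δ)_{δ>0}` with constant `C_Ψ`. -/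
def AssumptionA (Ψ : ℝ → ℝ → ℝ) (CΨ : ℝ) : Prop :=
  0 < CΨ ∧ ∀ δ : ℝ, 0 < δ →
    Ψ δ 0 = 0 ∧ ContDiff ℝ 2 (Ψ δ) ∧
    (∀ r : ℝ, δ ≤ |r| → deriv (Ψ δ) r = Real.sign r) ∧
    (∀ r : ℝ, |deriv (Ψ δ) r| ≤ CΨ) ∧
    (∀ r : ℝ, |deriv (deriv (Ψ δ)) r| ≤ CΨ / δ)

/-- The quantity `I_δ = ½ ∫_ℝ (Ψ'_δ(r) − sgn r) dr`. -/
noncomputable def Idelta (Ψ : ℝ → ℝ → ℝ) (δ : ℝ) : ℝ :=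
  (1 / 2) * ∫ r : ℝ, (deriv (Ψ δ) r - Real.sign r)

/-- An unperturbed wave `R₀`: a `W^{2,∞}` solution of `M R₀ = A²(sgn ∘ R₀) + μ₀` with
`R₀(0) = 0` which leaves a neighbourhood of `0` monotonically and stays away from `0`. -/
def UnperturbedWave (c : ℝ) (R₀ : ℝ → ℝ) : Prop :=
  IsW2inf R₀ ∧ R₀ 0 = 0 ∧
  (∃ μ₀ : ℝ, ∀ x, Mop c R₀ x = Aop (Aop (fun y => Real.sign (R₀ y))) x + μ₀) ∧
  ∃ x₀ r₀ d₀ : ℝ, 0 < x₀ ∧ 0 < r₀ ∧ 0 < d₀ ∧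
    (∀ x, x₀ < x → r₀ < R₀ x) ∧ (∀ x, x < -x₀ → R₀ x < -r₀) ∧
    (∀ x, |x| < x₀ → d₀ < deriv R₀ x)

/-- `δ`-admissibility of a corrector `S` relative to `R₀`. -/
def Admissible (δ : ℝ) (R₀ S : ℝ → ℝ) : Prop :=
  IsW2inf S ∧ S 0 = 0 ∧
  ∃ xm xp : ℝ, xm < 0 ∧ 0 < xp ∧
    R₀ xm + S xm = -δ ∧ R₀ xp + S xp = δ ∧
    (∀ x, x < xm → R₀ x + S x < -δ) ∧
    (∀ x, xp < x → δ < R₀ x + S x) ∧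
    (∀ x, xm < x → x < xp →
      deriv R₀ 0 / 2 < deriv R₀ x + deriv S x ∧ deriv R₀ x + deriv S x < 2 * deriv R₀ 0)

/-- The nonlinear superposition operator `G(S)(x) = Ψ'_δ(R₀(x)+S(x)) − sgn(R₀(x))`. -/
noncomputable def Gop (Ψ : ℝ → ℝ → ℝ) (δ : ℝ) (R₀ S : ℝ → ℝ) : ℝ → ℝ :=
  fun x => deriv (Ψ δ) (R₀ x + S x) - Real.sign (R₀ x)

/-- The supremum norm `‖f‖_∞ = ⨆ x, |f x|` (for bounded functions). -/
noncomputable def supNorm (f : ℝ → ℝ) : ℝ := ⨆ x : ℝ, |f x|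

/-!
An admissible perturbation `R₀ + S` crosses `[-δ, δ]` with slope at least `R₀'(0) / 2`, hence
within `|x| < 4 δ / R₀'(0)`. Beyond that distance `Ψ'_δ(R₀ + S) = sgn x` whatever `S` is, and
`G(S₂) - G(S₁)` vanishes. Within it, `S₁(0) = S₂(0)` makes `|S₂ - S₁|` of order `δ ‖S₂' - S₁'‖_∞`,
which compensates the Lipschitz constant `C_Ψ / δ` of `Ψ'_δ`. Thus `G(S₂) - G(S₁)` is of order
`‖S₂' - S₁'‖_∞` on a support of length of order `δ`, and averaging it gains the factor `δ`.
-/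

theorem supNorm_le {f : ℝ → ℝ} {K : ℝ} (hf : ∀ x, |f x| ≤ K) : supNorm f ≤ K :=
  ciSup_le hf

theorem abs_le_supNorm {f : ℝ → ℝ} {K : ℝ} (hf : ∀ x, |f x| ≤ K) (x : ℝ) : |f x| ≤ supNorm f :=
  le_ciSup (f := fun x => |f x|) ⟨K, Set.forall_mem_range.2 hf⟩ x

section Averaging

variable {F G : ℝ → ℝ} {K : ℝ}

theorem continuous_Aop (hF : ∀ a b, IntervalIntegrable F volume a b) : Continuous (Aop F) := by
  have hprim : Continuous fun b => ∫ s in (0 : ℝ)..b, F s :=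
    intervalIntegral.continuous_primitive hF 0
  have hAop : Aop F = fun x =>
      (∫ s in (0 : ℝ)..(x + 1 / 2), F s) - ∫ s in (0 : ℝ)..(x - 1 / 2), F s :=
    funext fun x => (intervalIntegral.integral_interval_sub_left (hF _ _) (hF _ _)).symm
  rw [hAop]
  fun_prop

theorem Aop_sub (hF : ∀ a b, IntervalIntegrable F volume a b)
    (hG : ∀ a b, IntervalIntegrable G volume a b) (x : ℝ) :
    Aop (fun y => F y - G y) x = Aop F x - Aop G x :=
  intervalIntegral.integral_sub (hF _ _) (hG _ _)

theorem abs_Aop_le (hF : ∀ x, |F x| ≤ K) (x : ℝ) : |Aop F x| ≤ K := by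
  have hlength : |x + 1 / 2 - (x - 1 / 2)| = 1 := by
    rw [add_sub_sub_cancel, add_halves, abs_one]
  calc |Aop F x| ≤ K * |x + 1 / 2 - (x - 1 / 2)| :=
        intervalIntegral.norm_integral_le_of_norm_le_const
          fun y _ => (Real.norm_eq_abs (F y)).trans_le (hF y)
    _ = K := by rw [hlength, mul_one]

theorem abs_Aop_le_mul_volume_of_support_subset {s : Set ℝ} (hs : volume s ≠ ⊤)
    (hF : ∀ x, |F x| ≤ K) (hsupp : Function.support F ⊆ s) (x : ℝ) :
    |Aop F x| ≤ K * volume.real s := by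
  have hK : 0 ≤ K := (abs_nonneg _).trans (hF 0)
  set I := Set.Ioc (x - 1 / 2) (x + 1 / 2)
  have hrestrict : Aop F x = ∫ y in I ∩ s, F y := by
    rw [Aop, intervalIntegral.integral_of_le (by linarith)]
    exact setIntegral_eq_of_subset_of_forall_sdiff_eq_zero measurableSet_Ioc Set.inter_subset_left
      fun y hy => Function.notMem_support.1 fun hy' => hy.2 ⟨hy.1, hsupp hy'⟩
  calc |Aop F x| ≤ K * volume.real (I ∩ s) := by
        rw [hrestrict]
        exact norm_setIntegral_le_of_norm_le_const
          (measure_lt_top_of_subset Set.inter_subset_right hs)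
          fun y _ => (Real.norm_eq_abs (F y)).trans_le (hF y)
    _ ≤ K * volume.real s := by gcongr; exact Set.inter_subset_right

end Averaging

theorem measurable_real_sign : Measurable Real.sign :=
  Measurable.ite measurableSet_Iio measurable_const
    (Measurable.ite measurableSet_Ioi measurable_const measurable_const)

theorem abs_real_sign_le_one (r : ℝ) : |Real.sign r| ≤ 1 := by
  rcases Real.sign_apply_eq r with h | h | h <;> simp [h]

theorem intervalIntegrable_real_sign_comp {μ : Measure ℝ} [IsLocallyFiniteMeasure μ] {f : ℝ → ℝ}
    (hf : Measurable f) (a b : ℝ) : IntervalIntegrable (fun x => Real.sign (f x)) μ a b :=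
  (intervalIntegrable_const (c := (1 : ℝ))).mono_fun
    (measurable_real_sign.comp hf).aestronglyMeasurable
    (.of_forall fun x => by
      simpa only [norm_one, Real.norm_eq_abs] using abs_real_sign_le_one (f x))

theorem UnperturbedWave.deriv_zero_pos {c : ℝ} {R₀ : ℝ → ℝ} (hR₀ : UnperturbedWave c R₀) :
    0 < deriv R₀ 0 := by
  obtain ⟨-, -, -, x₀, r₀, d₀, hx₀, -, hd₀, -, -, hderiv⟩ := hR₀
  exact hd₀.trans (hderiv 0 (by rwa [abs_zero]))

section Nonlinearity

variable {Ψ : ℝ → ℝ → ℝ} {CΨ δ : ℝ}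

theorem AssumptionA.differentiable_deriv (hA : AssumptionA Ψ CΨ) (hδ : 0 < δ) :
    Differentiable ℝ (deriv (Ψ δ)) :=
  (hA.2 δ hδ).2.1.differentiable_deriv_two

theorem AssumptionA.abs_deriv_sub_le (hA : AssumptionA Ψ CΨ) (hδ : 0 < δ) (r s : ℝ) :
    |deriv (Ψ δ) r - deriv (Ψ δ) s| ≤ CΨ / δ * |r - s| := by
  obtain ⟨-, -, -, -, hderiv₂⟩ := hA.2 δ hδ
  exact convex_univ.norm_image_sub_le_of_norm_deriv_le
    (fun y _ => hA.differentiable_deriv hδ y) (fun y _ => hderiv₂ y) trivial trivial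

theorem AssumptionA.deriv_eq_one (hA : AssumptionA Ψ CΨ) (hδ : 0 < δ) {r : ℝ} (hr : δ ≤ r) :
    deriv (Ψ δ) r = 1 := by
  rw [(hA.2 δ hδ).2.2.1 r (hr.trans (le_abs_self r)), Real.sign_of_pos (hδ.trans_le hr)]

theorem AssumptionA.deriv_eq_neg_one (hA : AssumptionA Ψ CΨ) (hδ : 0 < δ) {r : ℝ} (hr : r ≤ -δ) :
    deriv (Ψ δ) r = -1 := by
  rw [(hA.2 δ hδ).2.2.1 r ((le_neg_of_le_neg hr).trans (neg_le_abs r)),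
    Real.sign_of_neg (by linarith)]

end Nonlinearity

section Admissible

variable {δ : ℝ} {R₀ S S₁ S₂ : ℝ → ℝ}

theorem Admissible.differentiable (hS : Admissible δ R₀ S) : Differentiable ℝ S :=
  hS.1.1

theorem Admissible.deriv_zero_pos (hS : Admissible δ R₀ S) : 0 < deriv R₀ 0 := by
  obtain ⟨-, -, xm, xp, hxm, hxp, -, -, -, -, hslope⟩ := hS
  have hslope₀ := hslope 0 hxm hxp
  linarith

theorem Admissible.exists_transition_interval (hR₀ : Differentiable ℝ R₀)
    (hS : Admissible δ R₀ S) :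
    ∃ xm xp : ℝ, xm < 0 ∧ 0 < xp ∧ xp - xm < 4 * δ / deriv R₀ 0 ∧
      (∀ x < xm, R₀ x + S x < -δ) ∧ (∀ x > xp, δ < R₀ x + S x) := by
  have hd := hS.deriv_zero_pos
  obtain ⟨⟨hdiff, -, -⟩, -, xm, xp, hxm, hxp, hRm, hRp, hleft, hright, hslope⟩ := hS
  have hsum : Differentiable ℝ fun x => R₀ x + S x := hR₀.add hdiff
  have hcross : deriv R₀ 0 / 2 * (xp - xm) < (R₀ xp + S xp) - (R₀ xm + S xm) := by
    refine (convex_Icc xm xp).mul_sub_lt_image_sub_of_lt_deriv hsum.continuous.continuousOn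
      hsum.differentiableOn (fun x hx => ?_) xm ?_ xp ?_ (hxm.trans hxp)
    · rw [interior_Icc] at hx
      rw [deriv_fun_add (hR₀ x) (hdiff x)]
      exact (hslope x hx.1 hx.2).1
    · exact Set.left_mem_Icc.2 (hxm.trans hxp).le
    · exact Set.right_mem_Icc.2 (hxm.trans hxp).le
  refine ⟨xm, xp, hxm, hxp, ?_, hleft, hright⟩
  rw [lt_div_iff₀ hd]
  linarith

theorem Admissible.deriv_comp_eq_sign {Ψ : ℝ → ℝ → ℝ} {CΨ : ℝ} (hA : AssumptionA Ψ CΨ)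
    (hδ : 0 < δ) (hR₀ : Differentiable ℝ R₀) (hS : Admissible δ R₀ S) {x : ℝ}
    (hx : 4 * δ / deriv R₀ 0 ≤ |x|) :
    deriv (Ψ δ) (R₀ x + S x) = Real.sign x := by
  obtain ⟨xm, xp, hxm, hxp, hwidth, hleft, hright⟩ := hS.exists_transition_interval hR₀
  rcases le_abs.1 hx with hx | hx
  · rw [hA.deriv_eq_one hδ (hright x (by linarith)).le, Real.sign_of_pos (by linarith)]
  · rw [hA.deriv_eq_neg_one hδ (hleft x (by linarith)).le, Real.sign_of_neg (by linarith)]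

theorem Admissible.abs_deriv_sub_le_supNorm (h₁ : Admissible δ R₀ S₁) (h₂ : Admissible δ R₀ S₂)
    (x : ℝ) : |deriv S₂ x - deriv S₁ x| ≤ supNorm fun y => deriv S₂ y - deriv S₁ y := by
  obtain ⟨⟨-, ⟨B₁, hB₁⟩, -⟩, -⟩ := h₁
  obtain ⟨⟨-, ⟨B₂, hB₂⟩, -⟩, -⟩ := h₂
  exact abs_le_supNorm (K := B₂ + B₁)
    (fun y => (abs_sub _ _).trans (add_le_add (hB₂ y).2 (hB₁ y).2)) x

theorem Admissible.abs_sub_le_supNorm_mul_abs (h₁ : Admissible δ R₀ S₁)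
    (h₂ : Admissible δ R₀ S₂) (x : ℝ) :
    |S₂ x - S₁ x| ≤ supNorm (fun y => deriv S₂ y - deriv S₁ y) * |x| := by
  have hmvt := convex_univ.norm_image_sub_le_of_norm_deriv_le (𝕜 := ℝ) (f := fun y => S₂ y - S₁ y)
    (C := supNorm fun y => deriv S₂ y - deriv S₁ y) (x := 0) (y := x)
    (fun y _ => (h₂.differentiable y).sub (h₁.differentiable y))
    (fun y _ => by
      rw [deriv_fun_sub (h₂.differentiable y) (h₁.differentiable y)]
      exact h₁.abs_deriv_sub_le_supNorm h₂ y)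
    trivial trivial
  simpa only [h₁.2.1, h₂.2.1, sub_zero, Real.norm_eq_abs] using hmvt

end Admissible

section Superposition

variable {Ψ : ℝ → ℝ → ℝ} {CΨ δ : ℝ} {R₀ S S₁ S₂ : ℝ → ℝ}

theorem intervalIntegrable_Gop_of_continuous (hΨ : Continuous (deriv (Ψ δ)))
    (hR₀ : Continuous R₀) (hS : Continuous S) (a b : ℝ) :
    IntervalIntegrable (Gop Ψ δ R₀ S) volume a b :=
  ((hΨ.comp (hR₀.add hS)).intervalIntegrable a b).sub
    (intervalIntegrable_real_sign_comp hR₀.measurable a b)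

theorem Admissible.intervalIntegrable_Gop (hA : AssumptionA Ψ CΨ) (hδ : 0 < δ)
    (hR₀ : Differentiable ℝ R₀) (hS : Admissible δ R₀ S) (a b : ℝ) :
    IntervalIntegrable (Gop Ψ δ R₀ S) volume a b :=
  intervalIntegrable_Gop_of_continuous (hA.differentiable_deriv hδ).continuous hR₀.continuous
    hS.differentiable.continuous a b

theorem Gop_sub_Gop (Ψ : ℝ → ℝ → ℝ) (δ : ℝ) (R₀ S₁ S₂ : ℝ → ℝ) (x : ℝ) :
    Gop Ψ δ R₀ S₂ x - Gop Ψ δ R₀ S₁ x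
      = deriv (Ψ δ) (R₀ x + S₂ x) - deriv (Ψ δ) (R₀ x + S₁ x) :=
  sub_sub_sub_cancel_right _ _ _

theorem Gop_sub_Gop_eq_zero (hA : AssumptionA Ψ CΨ) (hδ : 0 < δ) (hR₀ : Differentiable ℝ R₀)
    (h₁ : Admissible δ R₀ S₁) (h₂ : Admissible δ R₀ S₂) {x : ℝ}
    (hx : 4 * δ / deriv R₀ 0 ≤ |x|) : Gop Ψ δ R₀ S₂ x - Gop Ψ δ R₀ S₁ x = 0 := by
  rw [Gop_sub_Gop, h₁.deriv_comp_eq_sign hA hδ hR₀ hx, h₂.deriv_comp_eq_sign hA hδ hR₀ hx,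
    sub_self]

theorem abs_Gop_sub_Gop_le (hA : AssumptionA Ψ CΨ) (hδ : 0 < δ) (hR₀ : Differentiable ℝ R₀)
    (h₁ : Admissible δ R₀ S₁) (h₂ : Admissible δ R₀ S₂) (x : ℝ) :
    |Gop Ψ δ R₀ S₂ x - Gop Ψ δ R₀ S₁ x|
      ≤ 4 * CΨ / deriv R₀ 0 * supNorm fun y => deriv S₂ y - deriv S₁ y := by
  have hC := hA.1
  have hd := h₁.deriv_zero_pos
  set N := supNorm fun y => deriv S₂ y - deriv S₁ y
  have hN : 0 ≤ N := (abs_nonneg _).trans (h₁.abs_deriv_sub_le_supNorm h₂ 0)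
  rcases le_total (4 * δ / deriv R₀ 0) |x| with hx | hx
  · rw [Gop_sub_Gop_eq_zero hA hδ hR₀ h₁ h₂ hx, abs_zero]
    positivity
  · calc |Gop Ψ δ R₀ S₂ x - Gop Ψ δ R₀ S₁ x| ≤ CΨ / δ * |S₂ x - S₁ x| := by
          rw [Gop_sub_Gop, ← add_sub_add_left_eq_sub (S₂ x) (S₁ x) (R₀ x)]
          exact hA.abs_deriv_sub_le hδ _ _
      _ ≤ CΨ / δ * (N * (4 * δ / deriv R₀ 0)) := by
          gcongr
          exact (h₁.abs_sub_le_supNorm_mul_abs h₂ x).trans (by gcongr)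
      _ = 4 * CΨ / deriv R₀ 0 * N := by field_simp

theorem abs_Aop_Gop_sub_Aop_Gop_le (hA : AssumptionA Ψ CΨ) (hδ : 0 < δ)
    (hR₀ : Differentiable ℝ R₀) (h₁ : Admissible δ R₀ S₁) (h₂ : Admissible δ R₀ S₂) (x : ℝ) :
    |Aop (Gop Ψ δ R₀ S₂) x - Aop (Gop Ψ δ R₀ S₁) x|
      ≤ 4 * CΨ / deriv R₀ 0 * supNorm (fun y => deriv S₂ y - deriv S₁ y)
        * (8 * δ / deriv R₀ 0) := by
  have hd := h₁.deriv_zero_pos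
  have hsupp : (Function.support fun y => Gop Ψ δ R₀ S₂ y - Gop Ψ δ R₀ S₁ y) ⊆
      Set.Icc (-(4 * δ / deriv R₀ 0)) (4 * δ / deriv R₀ 0) := fun y hy =>
    abs_le.1 (not_lt.1 fun hlt => hy (Gop_sub_Gop_eq_zero hA hδ hR₀ h₁ h₂ hlt.le))
  have hvol : volume.real (Set.Icc (-(4 * δ / deriv R₀ 0)) (4 * δ / deriv R₀ 0))
      = 8 * δ / deriv R₀ 0 := by
    rw [Real.volume_real_Icc_of_le (neg_le_self (by positivity))]
    ring
  rw [← Aop_sub (h₂.intervalIntegrable_Gop hA hδ hR₀) (h₁.intervalIntegrable_Gop hA hδ hR₀),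
    ← hvol]
  exact abs_Aop_le_mul_volume_of_support_subset measure_Icc_lt_top.ne
    (abs_Gop_sub_Gop_le hA hδ hR₀ h₁ h₂) hsupp x

theorem abs_Aop_Aop_Gop_sub_Aop_Aop_Gop_le (hA : AssumptionA Ψ CΨ) (hδ : 0 < δ)
    (hR₀ : Differentiable ℝ R₀) (h₁ : Admissible δ R₀ S₁) (h₂ : Admissible δ R₀ S₂) (x : ℝ) :
    |Aop (Aop (Gop Ψ δ R₀ S₂)) x - Aop (Aop (Gop Ψ δ R₀ S₁)) x|
      ≤ 4 * CΨ / deriv R₀ 0 * supNorm (fun y => deriv S₂ y - deriv S₁ y)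
        * (8 * δ / deriv R₀ 0) := by
  have hcont : ∀ S, Admissible δ R₀ S → Continuous (Aop (Gop Ψ δ R₀ S)) := fun S hS =>
    continuous_Aop (hS.intervalIntegrable_Gop hA hδ hR₀)
  rw [← Aop_sub (hcont S₂ h₂).intervalIntegrable (hcont S₁ h₁).intervalIntegrable]
  exact abs_Aop_le (abs_Aop_Gop_sub_Aop_Gop_le hA hδ hR₀ h₁ h₂) x

theorem stmt11_general (hA : AssumptionA Ψ CΨ) (hδ : 0 < δ) (hR₀ : Differentiable ℝ R₀)
    (h₁ : Admissible δ R₀ S₁) (h₂ : Admissible δ R₀ S₂) :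
    supNorm (fun x => Aop (Aop (Gop Ψ δ R₀ S₂)) x - Aop (Aop (Gop Ψ δ R₀ S₁)) x)
        + supNorm (fun x => Aop (Gop Ψ δ R₀ S₂) x - Aop (Gop Ψ δ R₀ S₁) x)
        + δ * supNorm (fun x => Gop Ψ δ R₀ S₂ x - Gop Ψ δ R₀ S₁ x)
      ≤ 4 * CΨ / deriv R₀ 0 * (16 / deriv R₀ 0 + 1) * δ
        * supNorm (fun x => deriv S₂ x - deriv S₁ x) := by
  set N := supNorm fun x => deriv S₂ x - deriv S₁ x
  calc _ ≤ 4 * CΨ / deriv R₀ 0 * N * (8 * δ / deriv R₀ 0)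
        + 4 * CΨ / deriv R₀ 0 * N * (8 * δ / deriv R₀ 0) + δ * (4 * CΨ / deriv R₀ 0 * N) := by
        gcongr
        · exact supNorm_le (abs_Aop_Aop_Gop_sub_Aop_Aop_Gop_le hA hδ hR₀ h₁ h₂)
        · exact supNorm_le (abs_Aop_Gop_sub_Aop_Gop_le hA hδ hR₀ h₁ h₂)
        · exact supNorm_le (abs_Gop_sub_Gop_le hA hδ hR₀ h₁ h₂)
    _ = _ := by ring

end Superposition

/-- Lipschitz continuity of `G`:
`‖A²G₂ − A²G₁‖_∞ + ‖A G₂ − A G₁‖_∞ + δ ‖G₂ − G₁‖_∞ ≤ C_L δ ‖S₂' − S₁'‖_∞`. -/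
theorem stmt11 (c : ℝ) (hc0 : 0 < c) (hc1 : c < 1)
    (Ψ : ℝ → ℝ → ℝ) (CΨ : ℝ) (hA : AssumptionA Ψ CΨ)
    (R₀ : ℝ → ℝ) (hR₀ : UnperturbedWave c R₀) :
    ∃ CL δs : ℝ, 0 < CL ∧ 0 < δs ∧
      ∀ δ : ℝ, 0 < δ → δ < δs →
        ∀ S₁ S₂ : ℝ → ℝ, Admissible δ R₀ S₁ → Admissible δ R₀ S₂ →
          supNorm (fun x => Aop (Aop (Gop Ψ δ R₀ S₂)) x - Aop (Aop (Gop Ψ δ R₀ S₁)) x)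
            + supNorm (fun x => Aop (Gop Ψ δ R₀ S₂) x - Aop (Gop Ψ δ R₀ S₁) x)
            + δ * supNorm (fun x => Gop Ψ δ R₀ S₂ x - Gop Ψ δ R₀ S₁ x)
          ≤ CL * δ * supNorm (fun x => deriv S₂ x - deriv S₁ x) := by
  have hC := hA.1
  have hd := hR₀.deriv_zero_pos
  exact ⟨4 * CΨ / deriv R₀ 0 * (16 / deriv R₀ 0 + 1), 1, by positivity, one_pos,
    fun δ hδ _ S₁ S₂ h₁ h₂ => stmt11_general hA hδ hR₀.1.1 h₁ h₂⟩
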